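/- Let x₁ ∈ ℝ³, λ > 0, q̂ ∈ ℝ with q̂ ≠ 0, and b₁, b₂, b₃, b₄ ∈ ℝ³ affinely independent points distinct from x₁. Suppose y ∈ ℝ³ and p̂ ≠ 0 satisfy q̂ e^{-√λ_k |b_j - x₁|}/(4π|b_j - x₁|) = p̂_k e^{-√λ_k |b_j - y|}/(4π|b_j - y|) for all j = 1,…,4 and for two distinct values λ₁ ≠ λ₂ of λ (with corresponding p̂_1, p̂_2). Then y = x₁. -/

import Mathlib

open Real

/-!
For intensities `q`, `p`, distances `r`, `s` from a measurement point to the two sources, and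
`κ = √λ`, equality of the data says `exp (κ (s - r)) * (s / r) = p / q`, the same value at every
measurement point. Two values of `κ` separate the exponential from the algebraic factor, so both
`s - r` and `s / r` are independent of the measurement point, and hence so is `r ^ 2 - s ^ 2`. The
level sets of `r ^ 2 - s ^ 2` are hyperplanes orthogonal to the line through the sources, unless the
sources coincide; points that affinely span the space do not fit into a hyperplane.
-/

section Kernel

/-- The Green function of `κ ^ 2 - Δ` in `ℝ³` (Yukawa potential) as a function of the distance `r`
to the source; the Laplace parameter `λ` corresponds to `κ = √λ`. -/
noncomputable def yukawaKernel (κ r : ℝ) : ℝ :=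
  exp (-κ * r) / (4 * π * r)

lemma yukawaKernel_ne_zero (κ : ℝ) {r : ℝ} (hr : r ≠ 0) : yukawaKernel κ r ≠ 0 :=
  div_ne_zero (exp_ne_zero _) (mul_ne_zero (by positivity) hr)

lemma yukawaKernel_div_yukawaKernel (κ r s : ℝ) :
    yukawaKernel κ r / yukawaKernel κ s = exp (κ * (s - r)) * (s / r) := by
  have hπ : 4 * π ≠ 0 := by positivity
  calc yukawaKernel κ r / yukawaKernel κ s
      = exp (-κ * r) / exp (-κ * s) * (4 * π * s / (4 * π * r)) := by
        rw [yukawaKernel, yukawaKernel, div_div_div_comm, div_eq_mul_inv _ (_ / _), inv_div]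
    _ = exp (κ * (s - r)) * (s / r) := by
        rw [← exp_sub, mul_div_mul_left _ _ hπ]
        ring_nf

variable {κ₁ κ₂ : ℝ}

lemma eq_and_eq_of_exp_mul_mul_eq (hκ : κ₁ ≠ κ₂) {d d' ρ ρ' : ℝ} (hρ : ρ ≠ 0)
    (h₁ : exp (κ₁ * d) * ρ = exp (κ₁ * d') * ρ') (h₂ : exp (κ₂ * d) * ρ = exp (κ₂ * d') * ρ') :
    d = d' ∧ ρ = ρ' := by
  have hρ' {κ : ℝ} (h : exp (κ * d) * ρ = exp (κ * d') * ρ') :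
      ρ' = exp (κ * (d - d')) * ρ := by
    rw [mul_sub, exp_sub, div_mul_eq_mul_div, h, mul_div_cancel_left₀ _ (exp_ne_zero _)]
  have hexp : κ₁ * (d - d') = κ₂ * (d - d') :=
    exp_injective (mul_right_cancel₀ hρ ((hρ' h₁).symm.trans (hρ' h₂)))
  obtain rfl : d = d' :=
    sub_eq_zero.1 ((mul_eq_mul_right_iff.1 hexp).resolve_left hκ)
  exact ⟨rfl, mul_left_cancel₀ (exp_ne_zero _) h₁⟩

lemma sq_sub_sq_eq_of_sub_eq_of_div_eq {K : Type*} [Field K] {r s r' s' : K}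
    (hr : r ≠ 0) (hr' : r' ≠ 0) (hsub : s - r = s' - r') (hdiv : s / r = s' / r') :
    r ^ 2 - s ^ 2 = r' ^ 2 - s' ^ 2 := by
  have hmul : s * r' = s' * r := (div_eq_div_iff hr hr').1 hdiv
  linear_combination 2 * hmul - (s + r + s' + r') * hsub

lemma sq_sub_sq_eq_of_yukawaKernel_div_eq (hκ : κ₁ ≠ κ₂) {r s r' s' : ℝ}
    (hr : r ≠ 0) (hs : s ≠ 0) (hr' : r' ≠ 0)
    (h₁ : yukawaKernel κ₁ r / yukawaKernel κ₁ s = yukawaKernel κ₁ r' / yukawaKernel κ₁ s')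
    (h₂ : yukawaKernel κ₂ r / yukawaKernel κ₂ s = yukawaKernel κ₂ r' / yukawaKernel κ₂ s') :
    r ^ 2 - s ^ 2 = r' ^ 2 - s' ^ 2 := by
  simp only [yukawaKernel_div_yukawaKernel] at h₁ h₂
  obtain ⟨hsub, hdiv⟩ := eq_and_eq_of_exp_mul_mul_eq hκ (div_ne_zero hs hr) h₁ h₂
  exact sq_sub_sq_eq_of_sub_eq_of_div_eq hr hr' hsub hdiv

end Kernel

section Geometry

variable {V P ι : Type*} [NormedAddCommGroup V] [InnerProductSpace ℝ V] [MetricSpace P]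
  [NormedAddTorsor V P]

lemma two_mul_inner_vsub_vsub (p p' x y : P) :
    2 * inner ℝ (p -ᵥ p') (y -ᵥ x) =
      (dist p x ^ 2 - dist p y ^ 2) - (dist p' x ^ 2 - dist p' y ^ 2) := by
  have dist_sq (z : P) :
      dist p z ^ 2 = dist p p' ^ 2 + 2 * inner ℝ (p -ᵥ p') (p' -ᵥ z) + dist p' z ^ 2 := by
    simp only [dist_eq_norm_vsub V]
    rw [← vsub_add_vsub_cancel p p' z, norm_add_sq_real]
  rw [dist_sq x, dist_sq y, ← vsub_sub_vsub_cancel_left y x p', inner_sub_right]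
  ring

lemma eq_of_affineSpan_eq_top_of_dist_sq_sub_dist_sq_eq {b : ι → P}
    (hb : affineSpan ℝ (Set.range b) = ⊤) {x y : P}
    (h : ∀ i j, dist (b i) x ^ 2 - dist (b i) y ^ 2 = dist (b j) x ^ 2 - dist (b j) y ^ 2) :
    y = x := by
  have hle : vectorSpan ℝ (Set.range b) ≤ (ℝ ∙ (y -ᵥ x))ᗮ := by
    rw [vectorSpan_def, Submodule.span_le]
    rintro _ ⟨_, ⟨i, rfl⟩, _, ⟨j, rfl⟩, rfl⟩
    refine Submodule.mem_orthogonal_singleton_iff_inner_left.2 ?_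
    linarith [two_mul_inner_vsub_vsub (V := V) (b i) (b j) x y, h i j]
  rw [AffineSubspace.vectorSpan_eq_top_of_affineSpan_eq_top ℝ V P hb] at hle
  have hself : inner ℝ (y -ᵥ x) (y -ᵥ x) = 0 :=
    Submodule.mem_orthogonal_singleton_iff_inner_left.1 (hle Submodule.mem_top)
  exact vsub_eq_zero_iff_eq.1 (inner_self_eq_zero.1 hself)

theorem source_location_identifiable_general {b : ι → P}
    (hb : affineSpan ℝ (Set.range b) = ⊤) {x y : P} (hbx : ∀ j, b j ≠ x) (hby : ∀ j, b j ≠ y)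
    {κ q p : Fin 2 → ℝ} (hκ : κ 0 ≠ κ 1) (hq : ∀ k, q k ≠ 0)
    (h : ∀ k j, q k * yukawaKernel (κ k) (dist (b j) x) =
      p k * yukawaKernel (κ k) (dist (b j) y)) :
    y = x := by
  have hratio (k : Fin 2) (j : ι) :
      yukawaKernel (κ k) (dist (b j) x) / yukawaKernel (κ k) (dist (b j) y) = p k / q k := by
    rw [div_eq_div_iff (yukawaKernel_ne_zero _ (dist_ne_zero.2 (hby j))) (hq k), mul_comm, h]
  exact eq_of_affineSpan_eq_top_of_dist_sq_sub_dist_sq_eq hb fun i j ↦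
    sq_sub_sq_eq_of_yukawaKernel_div_eq hκ
      (dist_ne_zero.2 (hbx i)) (dist_ne_zero.2 (hby i)) (dist_ne_zero.2 (hbx j))
      ((hratio 0 i).trans (hratio 0 j).symm) ((hratio 1 i).trans (hratio 1 j).symm)

end Geometry

/-- Identifiability of a single point-source location in ℝ³ from four affinely
independent measurement points and two values of the Laplace parameter. -/
theorem source_location_identifiable (x₁ : EuclideanSpace ℝ (Fin 3))
    (b : Fin 4 → EuclideanSpace ℝ (Fin 3)) (hb : AffineIndependent ℝ b)
    (hbx : ∀ j, b j ≠ x₁)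
    (qhat : ℝ) (hq : qhat ≠ 0)
    (lam : Fin 2 → ℝ) (hlam : ∀ k, 0 < lam k) (hlamne : lam 0 ≠ lam 1)
    (y : EuclideanSpace ℝ (Fin 3)) (hby : ∀ j, b j ≠ y)
    (phat : Fin 2 → ℝ) (hp : ∀ k, phat k ≠ 0)
    (heq : ∀ k, ∀ j,
      qhat * Real.exp (-Real.sqrt (lam k) * dist (b j) x₁) / (4 * Real.pi * dist (b j) x₁) =
        phat k * Real.exp (-Real.sqrt (lam k) * dist (b j) y) / (4 * Real.pi * dist (b j) y)) :
    y = x₁ := by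
  have hspan : affineSpan ℝ (Set.range b) = ⊤ :=
    hb.affineSpan_eq_top_iff_card_eq_finrank_add_one.2 (by simp)
  have hκ : √(lam 0) ≠ √(lam 1) := (sqrt_inj (hlam 0).le (hlam 1).le).not.2 hlamne
  refine source_location_identifiable_general (κ := fun k ↦ √(lam k))
    (q := fun _ ↦ qhat) (p := phat) hspan hbx hby hκ (fun _ ↦ hq) fun k j ↦ ?_
  simpa only [yukawaKernel, mul_div_assoc] using heq k j
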